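/- Infinite-horizon consistency of stochastic dynamic programming: In the standing setting, suppose 𝒱 is a set of lsc functions 𝒳 → ℝ̄ satisfying Assumption 2, closed with respect to the Attouch–Wets distance dl, and suppose 𝐏_ν converges weakly to 𝐏, φ_ν epi-converges to φ and φ_ν converges pointwise to φ on 𝒳 × 𝒳 × Ξ. Suppose every epi-convergent sequence (V_ν)_ν with V_ν ∈ 𝒱 is equi-lsc and satisfies for each x̄ ∈ 𝒳: (i) liminf_{α→−∞} liminf_{(ν,x)→(∞,x̄)} ∫_Ξ b_ν(V_ν)(x,ξ) 1{b_ν(V_ν)(x,ξ) ≤ α} d𝐏_ν(ξ) = 0 and the functions b_ν(V_ν) are lsc on 𝒳 × Ξ and form an equi-lsc sequence; (ii) limsup_{α→∞} limsup_{ν→∞} ∫_Ξ b_ν(V_ν)(x̄,ξ) 1{b_ν(V_ν)(x̄,ξ) ≥ α} d𝐏_ν(ξ) = 0 and the functions b_ν(V_ν)(x̄,·) are usc on Ξ and form an equi-usc sequence. Then the outer limit (with respect to epi-convergence) of the sets {V ∈ 𝒱 : V = B_ν(V)} is contained in {V ∈ 𝒱 : V = B(V)}. If in addition 𝒱 is compact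 under dl and each B_ν has a fixed point V_ν = B_ν(V_ν) ∈ 𝒱, then every epi-convergence cluster point of (V_ν) lies in {V ∈ 𝒱 : V = B(V)}, and this set is nonempty. -/

import Mathlib

/-!
Let fixed points `s κ = B_{ψ κ}(s κ)` in `𝒱` epi-converge to `W` along a subsequence `ψ`. Repeating
terms of `s` gives a sequence `V` indexed by all of `ℕ`, still epi-convergent to `W`, with
`V (ψ κ) = s κ`, to which the equi-semicontinuity and tail hypotheses apply.

* The tail conditions bound the integrals `B_ν(V ν)(x)` from above, so `W` is not identically `∞`.
  Epi-limits are lower semicontinuous, and epi-convergence implies convergence in the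
  Attouch–Wets distance (`awDist_tendsto_of_epi`), so closedness of `𝒱` gives `W ∈ 𝒱`.
* Equi-lower semicontinuity upgrades epi-convergence of `V` to pointwise convergence
  (`EquiLscOn.tendsto_of_epi`). Compactness of the feasible sets then yields pointwise convergence
  `b_ν(V ν)(x, ξ) → b(W)(x, ξ)` (`bop_tendsto`), and equi-semicontinuity in both directions turns
  this into continuous convergence in `ξ` (`continuous_convergence`).
* Clamping the integrands to `[-M, M]` costs no more than the two tail integrals, uniformly in `ν`,
  and clamped integrands may be integrated against weakly convergent measures
  (`bounded_integral_tendsto`). Hence `B_ν(V ν)(x) → B(W)(x)` (`eintegral_tendsto`).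

Along `ψ` the left side of the last limit is `s κ x`, which tends to `W x`; so `W = B(W)`. If `𝒱` is
compact, a subsequence of the fixed points converges in the Attouch–Wets distance, hence
epi-converges (`epi_of_awDist_tendsto`), and its limit is a fixed point of `B`.
-/

open Filter MeasureTheory Topology Set

noncomputable section

/-- Extended-real to extended-nonnegative-real (positive part). -/
def erealToENN (x : EReal) : ENNReal := if x = ⊤ then ⊤ else ENNReal.ofReal x.toReal

/-- Integral of an extended-real-valued function. -/
def eintegral {Ω : Type*} [MeasurableSpace Ω] (P : Measure Ω) (g : Ω → EReal) : EReal :=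
  ((∫⁻ ω, erealToENN (g ω) ∂P : ENNReal) : EReal) -
    ((∫⁻ ω, erealToENN (-(g ω)) ∂P : ENNReal) : EReal)

/-- Integrability of an extended-real-valued function. -/
def EIntegrable {Ω : Type*} [MeasurableSpace Ω] (P : Measure Ω) (g : Ω → EReal) : Prop :=
  AEMeasurable g P ∧ (∫⁻ ω, erealToENN (g ω) ∂P) < ⊤ ∧ (∫⁻ ω, erealToENN (-(g ω)) ∂P) < ⊤

/-- g·1{g ≤ α}. -/
def truncBelow {Ω : Type*} (g : Ω → EReal) (α : ℝ) (ω : Ω) : EReal :=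
  if g ω ≤ (α : EReal) then g ω else 0

/-- g·1{g ≥ α}. -/
def truncAbove {Ω : Type*} (g : Ω → EReal) (α : ℝ) (ω : Ω) : EReal :=
  if (α : EReal) ≤ g ω then g ω else 0

/-- Epi-convergence of a sequence of extended-real-valued functions on a set `Z`. -/
def EpiConvergesOn {E : Type*} [TopologicalSpace E] (Z : Set E)
    (F : ℕ → E → EReal) (f : E → EReal) : Prop :=
  ∀ z ∈ Z,
    (∀ zs : ℕ → E, (∀ ν, zs ν ∈ Z) → Tendsto zs atTop (𝓝 z) →
      f z ≤ liminf (fun ν => F ν (zs ν)) atTop) ∧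
    (∃ zs : ℕ → E, (∀ ν, zs ν ∈ Z) ∧ Tendsto zs atTop (𝓝 z) ∧
      limsup (fun ν => F ν (zs ν)) atTop ≤ f z)

/-- A sequence of functions is equi-lower semicontinuous on `Z`. -/
def EquiLscOn {E : Type*} [PseudoMetricSpace E] (Z : Set E) (F : ℕ → E → EReal) : Prop :=
  ∀ z ∈ Z,
    limsup (fun ν => F ν z) atTop = ⊥ ∨
    ∀ ρ ε : ℝ, 0 < ρ → 0 < ε → ∃ ν' : ℕ, ∃ δ : ℝ, 0 < δ ∧ ∀ ν, ν' ≤ ν →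
      min (F ν z - (ε : EReal)) (ρ : EReal) ≤
        ⨅ (w : E) (_ : w ∈ Z) (_ : dist w z ≤ δ), F ν w

/-- Equi-upper semicontinuity on `Z`. -/
def EquiUscOn {E : Type*} [PseudoMetricSpace E] (Z : Set E) (F : ℕ → E → EReal) : Prop :=
  EquiLscOn Z (fun ν z => -(F ν z))

/-- Iterated lower limit as `(ν, x) → (∞, x̄)` with `x` ranging over `X`. -/
def liminfNuX {E : Type*} [PseudoMetricSpace E] (X : Set E) (xb : E)
    (h : ℕ → E → EReal) : EReal :=
  ⨆ (δ : ℝ) (_ : 0 < δ) (ν' : ℕ),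
    ⨅ (ν : ℕ) (_ : ν' ≤ ν) (x : E) (_ : x ∈ X) (_ : dist x xb ≤ δ), h ν x

/-- Upper limit as `ν → ∞`. -/
def limsupNu (h : ℕ → EReal) : EReal := ⨅ (ν' : ℕ), ⨆ (ν : ℕ) (_ : ν' ≤ ν), h ν

/-- Lower limit as `α → −∞`. -/
def liminfAlphaBot (G : ℝ → EReal) : EReal := ⨆ (αb : ℝ), ⨅ (α : ℝ) (_ : α ≤ αb), G α

/-- Upper limit as `α → ∞`. -/
def limsupAlphaTop (G : ℝ → EReal) : EReal := ⨅ (αb : ℝ), ⨆ (α : ℝ) (_ : αb ≤ α), G α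

/-- Weak convergence of measures: integrals of bounded continuous functions converge. -/
def WeakConv {Ω : Type*} [TopologicalSpace Ω] [MeasurableSpace Ω]
    (Pν : ℕ → Measure Ω) (P : Measure Ω) : Prop :=
  ∀ h : Ω → ℝ, Continuous h → (∃ C : ℝ, ∀ ω, |h ω| ≤ C) →
    Tendsto (fun ν => ∫ ω, h ω ∂(Pν ν)) atTop (𝓝 (∫ ω, h ω ∂P))

/-- The outer limit of a sequence of sets in a topological space. -/
def OuterLimit {X : Type*} [TopologicalSpace X] (S : ℕ → Set X) : Set X :=
  {x | ∃ φ : ℕ → ℕ, StrictMono φ ∧ ∃ s : ℕ → X, (∀ κ, s κ ∈ S (φ κ)) ∧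
    Tendsto s atTop (𝓝 x)}

/-- The set of minimizers of `g` over `S`. -/
def ArgminOn {E : Type*} (S : Set E) (g : E → EReal) : Set E :=
  {y ∈ S | ∀ z ∈ S, g y ≤ g z}

/-- `b(f)(x,ξ) = inf_{y ∈ 𝒴(x,ξ)} { φ(x,y,ξ) + β f(y) }`. -/
def bop {E Ξ' : Type*} (Y : E → Ξ' → Set E) (β : ℝ) (φ : E → E → Ξ' → ℝ)
    (f : E → EReal) (x : E) (ξ : Ξ') : EReal :=
  ⨅ (y : E) (_ : y ∈ Y x ξ), (((φ x y ξ : ℝ) : EReal) + (β : EReal) * f y)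

/-- The epigraph of `f`, viewed within `X × ℝ`. -/
def epiSet {E : Type*} (X : Set E) (f : E → EReal) : Set (E × ℝ) :=
  {p | p.1 ∈ X ∧ f p.1 ≤ ((p.2 : ℝ) : EReal)}

/-- The Attouch–Wets distance between `f` and `g` (epigraphs taken within `X × ℝ`,
with centre `zc`). -/
def awDist {E : Type*} [PseudoMetricSpace E] (X : Set E) (zc : E × ℝ)
    (f g : E → EReal) : ℝ :=
  ∫ ρ in Set.Ioi (0 : ℝ),
    (sSup ((fun z => |Metric.infDist z (epiSet X f) - Metric.infDist z (epiSet X g)|) ''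
      (Metric.closedBall zc ρ))) * Real.exp (-ρ)

/-- `f` is a lower semicontinuous function on `X`, not identically `∞`. -/
def LscFcnOn {E : Type*} [TopologicalSpace E] (X : Set E) (f : E → EReal) : Prop :=
  LowerSemicontinuousOn f X ∧ ∃ x ∈ X, f x ≠ ⊤

/-- `𝒱` is (sequentially) closed with respect to the Attouch–Wets distance. -/
def DlSeqClosed {E : Type*} [PseudoMetricSpace E] (X : Set E) (zc : E × ℝ)
    (𝒱 : Set (E → EReal)) : Prop :=
  ∀ Vs : ℕ → (E → EReal), (∀ ν, Vs ν ∈ 𝒱) → ∀ W, LscFcnOn X W →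
    Tendsto (fun ν => awDist X zc (Vs ν) W) atTop (𝓝 0) → W ∈ 𝒱

/-- `𝒱` is (sequentially) compact with respect to the Attouch–Wets distance. -/
def DlSeqCompact {E : Type*} [PseudoMetricSpace E] (X : Set E) (zc : E × ℝ)
    (𝒱 : Set (E → EReal)) : Prop :=
  ∀ Vs : ℕ → (E → EReal), (∀ ν, Vs ν ∈ 𝒱) → ∃ W ∈ 𝒱, ∃ φ : ℕ → ℕ,
    StrictMono φ ∧ Tendsto (fun κ => awDist X zc (Vs (φ κ)) W) atTop (𝓝 0)

/-- The outer limit, with respect to epi-convergence on `X`, of a sequence of sets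
of functions. -/
def EpiOuterLimit {E : Type*} [TopologicalSpace E] (X : Set E)
    (S : ℕ → Set (E → EReal)) : Set (E → EReal) :=
  {W | ∃ φ : ℕ → ℕ, StrictMono φ ∧ ∃ s : ℕ → (E → EReal),
    (∀ κ, s κ ∈ S (φ κ)) ∧ EpiConvergesOn X s W}

/-! ### Epi-convergence: neighbourhood and sequential descriptions -/

/-- A sequence converging to `z`, indexed along a subsequence `n`, extends to all indices. -/
lemma exists_seq_extend {E : Type*} [TopologicalSpace E] {Z : Set E} {z : E} (hz : z ∈ Z)
    {n : ℕ → ℕ} (hn : StrictMono n) {w : ℕ → E} (hw : ∀ k, w k ∈ Z)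
    (hwz : Tendsto w atTop (𝓝 z)) :
    ∃ zs : ℕ → E, (∀ ν, zs ν ∈ Z) ∧ Tendsto zs atTop (𝓝 z) ∧ ∀ k, zs (n k) = w k := by
  classical
  refine ⟨Function.extend n w (fun _ => z), fun ν => ?_, ?_, fun k => hn.injective.extend_apply _ _ _⟩
  · by_cases h : ∃ k, n k = ν
    · obtain ⟨k, rfl⟩ := h
      rw [hn.injective.extend_apply]; exact hw k
    · rw [Function.extend_apply' _ _ _ h]; exact hz
  · rw [tendsto_def]
    intro U hU
    obtain ⟨K, hK⟩ := eventually_atTop.1 (hwz.eventually hU)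
    filter_upwards [eventually_ge_atTop (n K)] with ν hν
    by_cases h : ∃ k, n k = ν
    · obtain ⟨k, rfl⟩ := h
      rw [mem_preimage, hn.injective.extend_apply]
      exact hK k (hn.le_iff_le.1 hν)
    · rw [mem_preimage, Function.extend_apply' _ _ _ h]; exact mem_of_mem_nhds hU

/-- The sequential lower bound in epi-convergence upgrades to a joint lower limit in `(ν, w)`. -/
lemma EpiConvergesOn.le_liminf_prod {E : Type*} [TopologicalSpace E] [FirstCountableTopology E]
    {Z : Set E} {F : ℕ → E → EReal} {f : E → EReal} (h : EpiConvergesOn Z F f) {z : E}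
    (hz : z ∈ Z) :
    f z ≤ liminf (fun p : ℕ × E => F p.1 p.2) (atTop ×ˢ 𝓝[Z] z) := by
  by_contra hlt
  rw [not_le] at hlt
  obtain ⟨c, hc1, hc2⟩ := exists_between hlt
  have hfr := frequently_lt_of_liminf_lt (by isBoundedDefault) hc1
  have hev : ∀ᶠ p : ℕ × E in atTop ×ˢ 𝓝[Z] z, p.2 ∈ Z :=
    tendsto_snd.eventually self_mem_nhdsWithin
  obtain ⟨p, hp, hpF⟩ := exists_seq_forall_of_frequently (hfr.and_eventually hev)
  obtain ⟨ψ, hψ, hψ2⟩ := strictMono_subseq_of_tendsto_atTop (tendsto_fst.comp hp)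
  have hw : Tendsto (fun k => (p (ψ k)).2) atTop (𝓝 z) :=
    ((tendsto_snd.comp hp).comp hψ.tendsto_atTop).mono_right nhdsWithin_le_nhds
  obtain ⟨zs, hzs, hzt, hzk⟩ := exists_seq_extend hz hψ2 (fun k => (hpF (ψ k)).2) hw
  have h1 := (h z hz).1 zs hzs hzt
  have h2 := eventually_lt_of_lt_liminf (lt_of_lt_of_le hc2 h1)
  obtain ⟨k, hk⟩ := (hψ2.tendsto_atTop.eventually h2).exists
  rw [hzk k] at hk
  exact lt_asymm hk (hpF (ψ k)).1

lemma EpiConvergesOn.eventually_lt {E : Type*} [TopologicalSpace E] [FirstCountableTopology E]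
    {Z : Set E} {F : ℕ → E → EReal} {f : E → EReal} (h : EpiConvergesOn Z F f) {z : E}
    (hz : z ∈ Z) {α : EReal} (hα : α < f z) :
    ∀ᶠ p : ℕ × E in atTop ×ˢ 𝓝[Z] z, α < F p.1 p.2 :=
  eventually_lt_of_lt_liminf (lt_of_lt_of_le hα (h.le_liminf_prod hz))

lemma eventually_prod_of_nhdsWithin {ι E : Type*} [TopologicalSpace E] {l : Filter ι} {Z : Set E}
    {z : E} {Q : ι × E → Prop} (h : ∀ᶠ p in l ×ˢ 𝓝[Z] z, Q p) :
    ∀ᶠ p in l ×ˢ 𝓝 z, p.2 ∈ Z → Q p := by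
  obtain ⟨pa, hpa, pb, hpb, hab⟩ := eventually_prod_iff.1 h
  rw [eventually_nhdsWithin_iff] at hpb
  exact eventually_prod_iff.2 ⟨pa, hpa, _, hpb, fun h1 _ h2 h3 => hab h1 (h2 h3)⟩

lemma EpiConvergesOn.eventually_lt' {E : Type*} [TopologicalSpace E] [FirstCountableTopology E]
    {Z : Set E} {F : ℕ → E → EReal} {f : E → EReal} (h : EpiConvergesOn Z F f) {z : E}
    (hz : z ∈ Z) {α : EReal} (hα : α < f z) :
    ∀ᶠ p : ℕ × E in atTop ×ˢ 𝓝 z, p.2 ∈ Z → α < F p.1 p.2 :=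
  eventually_prod_of_nhdsWithin (h.eventually_lt hz hα)

/-- Epi-convergence survives re-indexing by any `k` tending to infinity, injective or not. -/
lemma EpiConvergesOn.comp_tendsto {E : Type*} [TopologicalSpace E] [FirstCountableTopology E]
    {Z : Set E} {F : ℕ → E → EReal} {f : E → EReal} (h : EpiConvergesOn Z F f)
    {k : ℕ → ℕ} (hk : Tendsto k atTop atTop) : EpiConvergesOn Z (fun ν => F (k ν)) f := by
  intro z hz
  constructor
  · intro zs hzs hzt
    have ht : Tendsto (fun ν => (k ν, zs ν)) atTop (atTop ×ˢ 𝓝[Z] z) :=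
      hk.prodMk (tendsto_nhdsWithin_iff.2 ⟨hzt, Eventually.of_forall hzs⟩)
    exact (h.le_liminf_prod hz).trans (liminf_le_liminf_of_le (u := fun p : ℕ × E => F p.1 p.2) ht)
  · obtain ⟨zs, hzs, hzt, hl⟩ := (h z hz).2
    exact ⟨fun ν => zs (k ν), fun ν => hzs _, hzt.comp hk,
      (limsup_le_limsup_of_le (u := fun ν => F ν (zs ν)) hk).trans hl⟩

lemma EpiConvergesOn.lowerSemicontinuousOn {E : Type*} [TopologicalSpace E]
    [FirstCountableTopology E]
    {Z : Set E} {F : ℕ → E → EReal} {f : E → EReal} (h : EpiConvergesOn Z F f) :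
    LowerSemicontinuousOn f Z := by
  intro z hz α hα
  obtain ⟨α', h1, h2⟩ := exists_between hα
  obtain ⟨pa, hpa, pb, hpb, hab⟩ := eventually_prod_iff.1 (h.eventually_lt' hz h2)
  filter_upwards [eventually_nhdsWithin_of_eventually_nhds hpb.eventually_nhds,
    self_mem_nhdsWithin] with w hw hwZ
  obtain ⟨zs, hzs, hzt, hl⟩ := (h w hwZ).2
  refine lt_of_lt_of_le h1 (le_trans ?_ hl)
  refine le_limsup_of_frequently_le (Eventually.frequently ?_) (by isBoundedDefault)
  filter_upwards [hpa, hzt.eventually hw] with ν h3 h4 using (hab h3 h4 (hzs ν)).le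

lemma compact_eventually_forall {ι Y : Type*} [TopologicalSpace Y] {K : Set Y} (hK : IsCompact K)
    {l : Filter ι} {P : ι → Y → Prop} (hP : ∀ y ∈ K, ∀ᶠ z : ι × Y in l ×ˢ 𝓝 y, P z.1 z.2) :
    ∀ᶠ x in l, ∀ y ∈ K, P x y := by
  simp only [← eventually_iSup, ← hK.prod_nhdsSet_eq_biSup] at hP
  exact hP.curry.mono fun _ h ↦ h.self_of_nhdsSet

/-- Diagonal extraction: countably many eventual properties hold simultaneously along a
slowly growing index. -/
lemma exists_diag {Q : ℕ → ℕ → Prop} (hQ : ∀ k, ∀ᶠ ν in atTop, Q k ν) :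
    ∃ k : ℕ → ℕ, Tendsto k atTop atTop ∧ ∀ᶠ ν in atTop, Q (k ν) ν := by
  classical
  refine ⟨fun ν => Nat.findGreatest (fun k => ∀ ν' ≥ ν, Q k ν') ν, ?_, ?_⟩
  · refine tendsto_atTop.2 fun K => ?_
    obtain ⟨N, hN⟩ := eventually_atTop.1 (hQ K)
    filter_upwards [eventually_ge_atTop N, eventually_ge_atTop K] with ν h1 h2
    exact Nat.le_findGreatest h2 fun ν' h' => hN ν' (h1.trans h')
  · obtain ⟨N, hN⟩ := eventually_atTop.1 (hQ 0)
    filter_upwards [eventually_ge_atTop N] with ν h1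
    exact Nat.findGreatest_spec (P := fun k => ∀ ν' ≥ ν, Q k ν') (Nat.zero_le ν)
      (fun ν' h' => hN ν' (h1.trans h')) ν le_rfl

/-- A recovery sequence for `limsup ≤ c` at `z` exists as soon as every level above `c` is
eventually attained arbitrarily close to `z`. -/
lemma exists_recovery {E : Type*} [PseudoMetricSpace E] {Z : Set E} {F : ℕ → E → EReal} {z : E}
    (hz : z ∈ Z) {c : EReal}
    (h : ∀ α : EReal, c < α → ∀ δ > (0 : ℝ), ∀ᶠ ν in atTop, ∃ w ∈ Z, dist w z < δ ∧ F ν w ≤ α) :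
    ∃ zs : ℕ → E, (∀ ν, zs ν ∈ Z) ∧ Tendsto zs atTop (𝓝 z) ∧
      limsup (fun ν => F ν (zs ν)) atTop ≤ c := by
  classical
  rcases eq_or_ne c ⊤ with rfl | hc
  · exact ⟨fun _ => z, fun _ => hz, tendsto_const_nhds, le_top⟩
  obtain ⟨a, -, ha, hat⟩ := exists_seq_strictAnti_tendsto' (lt_top_iff_ne_top.2 hc)
  obtain ⟨k, hk, hkQ⟩ := exists_diag (fun k => h (a k) (ha k).1 (1 / ((k : ℝ) + 1)) (by positivity))
  have hch : ∀ ν, ∃ w ∈ Z, (∃ w ∈ Z, dist w z < 1 / ((k ν : ℝ) + 1) ∧ F ν w ≤ a (k ν)) →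
      dist w z < 1 / ((k ν : ℝ) + 1) ∧ F ν w ≤ a (k ν) := by
    intro ν
    by_cases hq : ∃ w ∈ Z, dist w z < 1 / ((k ν : ℝ) + 1) ∧ F ν w ≤ a (k ν)
    · obtain ⟨w, hw, hw2⟩ := hq
      exact ⟨w, hw, fun _ => hw2⟩
    · exact ⟨z, hz, fun h => absurd h hq⟩
  choose zs hzs hzp using hch
  refine ⟨zs, hzs, ?_, ?_⟩
  · rw [tendsto_iff_dist_tendsto_zero]
    refine squeeze_zero' (Eventually.of_forall fun _ => dist_nonneg) ?_
      (tendsto_one_div_add_atTop_nhds_zero_nat.comp hk)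
    filter_upwards [hkQ] with ν hν using (hzp ν hν).1.le
  · rw [← (hat.comp hk).limsup_eq]
    refine limsup_le_limsup ?_ (by isBoundedDefault) (by isBoundedDefault)
    filter_upwards [hkQ] with ν hν using (hzp ν hν).2

/-! ### Epi-convergence and the Attouch–Wets distance -/

lemma epiSet_isClosed {E : Type*} [TopologicalSpace E] {X : Set E} (hX : IsClosed X)
    {f : E → EReal} (hf : LowerSemicontinuousOn f X) : IsClosed (epiSet X f) := by
  have h := (lowerSemicontinuousOn_iff_isClosed_epigraph hX).1 hf
  exact h.preimage (f := fun p : E × ℝ => (p.1, (p.2 : EReal)))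
    (continuous_fst.prodMk (continuous_coe_real_ereal.comp continuous_snd))

lemma LscFcnOn.epiSet_nonempty {E : Type*} [TopologicalSpace E] {X : Set E}
    {f : E → EReal} (hf : LscFcnOn X f) : (epiSet X f).Nonempty := by
  obtain ⟨x, hx, hfx⟩ := hf.2
  exact ⟨(x, (f x).toReal), hx, EReal.le_coe_toReal hfx⟩

/-- Epi-convergence implies pointwise convergence of the distance functions to the epigraphs. The
lower bound holds because a closed ball missing the limit epigraph is compact and so eventually
misses the approximating ones; the upper bound comes from a recovery sequence. -/
lemma tendsto_infDist_of_epi {E : Type*} [PseudoMetricSpace E] [ProperSpace E] {X : Set E}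
    (hX : IsClosed X) {F : ℕ → E → EReal} {f : E → EReal} (hF : ∀ ν, LscFcnOn X (F ν))
    (hf : LscFcnOn X f) (h : EpiConvergesOn X F f) (p : E × ℝ) :
    Tendsto (fun ν => Metric.infDist p (epiSet X (F ν))) atTop
      (𝓝 (Metric.infDist p (epiSet X f))) := by
  rw [tendsto_order]
  constructor
  · intro r hr
    obtain ⟨r', hr1, hr2⟩ := exists_between hr
    have hne : ∀ q ∈ Metric.closedBall p r', ∀ᶠ y : ℕ × (E × ℝ) in atTop ×ˢ 𝓝 q,
        y.2 ∉ epiSet X (F y.1) := by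
      intro q hq
      have hqe : q ∉ epiSet X f := by
        intro hqe
        have := Metric.infDist_le_dist_of_mem (x := p) hqe
        rw [Metric.mem_closedBall, dist_comm] at hq
        linarith
      have hproj : Tendsto (fun y : ℕ × (E × ℝ) => y.2.1) (atTop ×ˢ 𝓝 q) (𝓝 q.1) :=
        (continuous_fst.tendsto q).comp tendsto_snd
      have hproj2 : Tendsto (fun y : ℕ × (E × ℝ) => y.2.2) (atTop ×ˢ 𝓝 q) (𝓝 q.2) :=
        (continuous_snd.tendsto q).comp tendsto_snd
      by_cases hqX : q.1 ∈ X
      · have hlt : (q.2 : EReal) < f q.1 := by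
          by_contra hc
          exact hqe ⟨hqX, not_lt.1 hc⟩
        obtain ⟨a, ha1, ha2⟩ := EReal.lt_iff_exists_real_btwn.1 hlt
        have ht : Tendsto (fun y : ℕ × (E × ℝ) => (y.1, y.2.1)) (atTop ×ˢ 𝓝 q)
            (atTop ×ˢ 𝓝 q.1) := tendsto_fst.prodMk hproj
        have ha1' : q.2 < a := by exact_mod_cast ha1
        filter_upwards [ht.eventually (h.eventually_lt' hqX ha2),
          hproj2.eventually (gt_mem_nhds ha1')] with y hy1 hy2 hy
        have h3 : (a : EReal) < (y.2.2 : ℝ) := (hy1 hy.1).trans_le hy.2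
        exact lt_asymm hy2 (by exact_mod_cast h3)
      · filter_upwards [hproj.eventually (hX.isOpen_compl.mem_nhds hqX)] with y hy hy2
        exact hy hy2.1
    have h2 : ∀ᶠ ν in atTop, ∀ q ∈ Metric.closedBall p r', q ∉ epiSet X (F ν) :=
      compact_eventually_forall (isCompact_closedBall p r') hne
    filter_upwards [h2] with ν h2
    refine hr1.trans_le ((Metric.le_infDist (hF ν).epiSet_nonempty).2 fun q hq => ?_)
    by_contra hc
    exact h2 q (by rw [Metric.mem_closedBall, dist_comm]; exact (not_le.1 hc).le) hq
  · intro r hr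
    obtain ⟨q, hq, hqr⟩ := (Metric.infDist_lt_iff hf.epiSet_nonempty).1 hr
    obtain ⟨zs, hzs, hzt, hl⟩ := (h q.1 hq.1).2
    obtain ⟨ε, hε, hε2⟩ : ∃ ε > 0, dist p q + ε < r := ⟨(r - dist p q) / 2, by linarith, by linarith⟩
    have hlt : limsup (fun ν => F ν (zs ν)) atTop < ((q.2 + ε / 2 : ℝ) : EReal) :=
      (hl.trans hq.2).trans_lt (by exact_mod_cast (by linarith : q.2 < q.2 + ε / 2))
    have h1 := eventually_lt_of_limsup_lt hlt
    have h2 := hzt.eventually (Metric.ball_mem_nhds q.1 hε)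
    filter_upwards [h1, h2] with ν h1 h2
    refine (Metric.infDist_le_dist_of_mem (s := epiSet X (F ν)) (y := (zs ν, q.2 + ε / 2)) ⟨hzs ν, h1.le⟩).trans_lt ?_
    refine (dist_triangle p q _).trans_lt (lt_of_le_of_lt ?_ hε2)
    gcongr
    rw [Prod.dist_eq]
    refine max_le ?_ ?_
    · rw [dist_comm]; exact (Metric.mem_ball.1 h2).le
    · simp [abs_of_pos hε]; linarith

lemma epi_of_tendsto_infDist {E : Type*} [PseudoMetricSpace E] {X : Set E}
    (hX : IsClosed X) {F : ℕ → E → EReal} {f : E → EReal} (hF : ∀ ν, LscFcnOn X (F ν))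
    (hf : LscFcnOn X f)
    (h : ∀ p : E × ℝ, Tendsto (fun ν => Metric.infDist p (epiSet X (F ν))) atTop
      (𝓝 (Metric.infDist p (epiSet X f)))) : EpiConvergesOn X F f := by
  intro z hz
  constructor
  · intro zs hzs hzt
    by_contra hlt
    rw [not_le] at hlt
    obtain ⟨a, ha1, ha2⟩ := EReal.lt_iff_exists_real_btwn.1 hlt
    have hfr := frequently_lt_of_liminf_lt (by isBoundedDefault) ha1
    have hmem : ((z, a) : E × ℝ) ∈ epiSet X f := by
      rw [(epiSet_isClosed hX hf.1).mem_iff_infDist_zero hf.epiSet_nonempty]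
      refine le_antisymm ?_ Metric.infDist_nonneg
      refine le_of_forall_pos_le_add fun ε hε => ?_
      by_contra hc
      have h1 := (h (z, a)).eventually (lt_mem_nhds (not_le.1 hc))
      have h2 := hzt.eventually (Metric.ball_mem_nhds z hε)
      obtain ⟨ν, h3, h4, h5⟩ := (hfr.and_eventually (h1.and h2)).exists
      have h6 := Metric.infDist_le_dist_of_mem (x := (z, a)) (s := epiSet X (F ν))
        (y := (zs ν, a)) ⟨hzs ν, h3.le⟩
      have h7 : dist ((z, a) : E × ℝ) (zs ν, a) < ε := by
        rw [Prod.dist_eq, dist_self, max_eq_left dist_nonneg, dist_comm]; exact h5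
      linarith
    exact absurd hmem.2 (not_le.2 ha2)
  · refine exists_recovery hz fun α hα δ hδ => ?_
    obtain ⟨a, ha1, ha2⟩ := EReal.lt_iff_exists_real_btwn.1 hα
    obtain ⟨b, hb1, hb2⟩ := EReal.lt_iff_exists_real_btwn.1 ha2
    have hab : a < b := by exact_mod_cast hb1
    have hmem : ((z, a) : E × ℝ) ∈ epiSet X f := ⟨hz, ha1.le⟩
    have h1 := h (z, a)
    rw [Metric.infDist_zero_of_mem hmem] at h1
    filter_upwards [h1.eventually (gt_mem_nhds (lt_min hδ (sub_pos.2 hab)))] with ν hν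
    obtain ⟨q, hq, hqd⟩ := (Metric.infDist_lt_iff (hF ν).epiSet_nonempty).1 hν
    rw [Prod.dist_eq] at hqd
    refine ⟨q.1, hq.1, ?_, hq.2.trans ?_⟩
    · rw [dist_comm]
      exact (le_max_left _ _).trans_lt (hqd.trans_le (min_le_left _ _))
    · have h3 : dist a q.2 < b - a := (le_max_right _ _).trans_lt (hqd.trans_le (min_le_right _ _))
      rw [Real.dist_eq, abs_lt] at h3
      exact le_trans (by exact_mod_cast (by linarith : q.2 ≤ b)) hb2.le

/-- The localised gap `sup_{‖z - zc‖ ≤ ρ} |dist(z, A) - dist(z, B)|` between two sets, i.e. the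
integrand of the Attouch–Wets distance without its exponential weight. -/
def distGap {M : Type*} [PseudoMetricSpace M] (A B : Set M) (zc : M) (ρ : ℝ) : ℝ :=
  sSup ((fun z => |Metric.infDist z A - Metric.infDist z B|) '' (Metric.closedBall zc ρ))

section distGap

variable {M : Type*} [PseudoMetricSpace M] (A B : Set M) (zc : M)

lemma gap_le {ρ : ℝ} {z : M} (hz : z ∈ Metric.closedBall zc ρ) :
    |Metric.infDist z A - Metric.infDist z B| ≤
      |Metric.infDist zc A - Metric.infDist zc B| + 2 * ρ := by
  have h1 := Metric.infDist_le_infDist_add_dist (s := A) (x := z) (y := zc)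
  have h2 := Metric.infDist_le_infDist_add_dist (s := A) (x := zc) (y := z)
  have h3 := Metric.infDist_le_infDist_add_dist (s := B) (x := z) (y := zc)
  have h4 := Metric.infDist_le_infDist_add_dist (s := B) (x := zc) (y := z)
  have h5 : dist z zc ≤ ρ := hz
  rw [dist_comm zc z] at h2 h4
  have h6 := le_abs_self (Metric.infDist zc A - Metric.infDist zc B)
  have h7 := neg_abs_le (Metric.infDist zc A - Metric.infDist zc B)
  rw [abs_le]
  constructor <;> linarith

lemma gap_bddAbove (ρ : ℝ) :
    BddAbove ((fun z => |Metric.infDist z A - Metric.infDist z B|) '' (Metric.closedBall zc ρ)) := by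
  refine ⟨|Metric.infDist zc A - Metric.infDist zc B| + 2 * ρ, ?_⟩
  rintro _ ⟨z, hz, rfl⟩
  exact gap_le A B zc hz

lemma distGap_nonneg (ρ : ℝ) : 0 ≤ distGap A B zc ρ := by
  refine Real.sSup_nonneg ?_
  rintro _ ⟨z, hz, rfl⟩
  exact abs_nonneg _

lemma le_distGap {ρ : ℝ} {z : M} (hz : z ∈ Metric.closedBall zc ρ) :
    |Metric.infDist z A - Metric.infDist z B| ≤ distGap A B zc ρ :=
  le_csSup (gap_bddAbove A B zc ρ) ⟨z, hz, rfl⟩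

lemma distGap_le {ρ c : ℝ} (hc : 0 ≤ c)
    (h : ∀ z ∈ Metric.closedBall zc ρ, |Metric.infDist z A - Metric.infDist z B| ≤ c) :
    distGap A B zc ρ ≤ c := by
  refine Real.sSup_le ?_ hc
  rintro _ ⟨z, hz, rfl⟩
  exact h z hz

lemma distGap_mono : Monotone (distGap A B zc) := fun _ _ h =>
  distGap_le A B zc (distGap_nonneg _ _ _ _) fun _ hz =>
    le_distGap A B zc (Metric.closedBall_subset_closedBall h hz)

lemma distGap_weight_measurable : Measurable fun ρ => distGap A B zc ρ * Real.exp (-ρ) :=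
  (distGap_mono A B zc).measurable.mul (by fun_prop)

lemma integrableOn_weight (C : ℝ) :
    IntegrableOn (fun ρ : ℝ => (C + 2 * ρ) * Real.exp (-ρ)) (Ioi 0) := by
  have h1 := Real.GammaIntegral_convergent (s := 1) one_pos
  have h2 := Real.GammaIntegral_convergent (s := 2) two_pos
  have h3 := (h1.const_mul C).add (h2.const_mul 2)
  refine IntegrableOn.congr_fun h3 (fun ρ _ => ?_) measurableSet_Ioi
  have : (2 : ℝ) - 1 = 1 := by norm_num
  simp [this]
  ring

lemma distGap_weight_integrable :
    IntegrableOn (fun ρ => distGap A B zc ρ * Real.exp (-ρ)) (Ioi 0) := by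
  refine (integrableOn_weight |Metric.infDist zc A - Metric.infDist zc B|).mono'
    (distGap_weight_measurable A B zc).aestronglyMeasurable ?_
  filter_upwards [ae_restrict_mem measurableSet_Ioi] with ρ hρ
  rw [Real.norm_of_nonneg (mul_nonneg (distGap_nonneg _ _ _ _) (Real.exp_pos _).le)]
  have hρ : (0 : ℝ) < ρ := hρ
  gcongr
  exact distGap_le A B zc (by positivity) fun z hz => gap_le A B zc hz

end distGap

lemma awDist_eq {E : Type*} [PseudoMetricSpace E] (X : Set E) (zc : E × ℝ) (f g : E → EReal) :
    awDist X zc f g =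
      ∫ ρ in Set.Ioi (0 : ℝ), distGap (epiSet X f) (epiSet X g) zc ρ * Real.exp (-ρ) := rfl

lemma awDist_tendsto_of_epi {E : Type*} [PseudoMetricSpace E] [ProperSpace E] {X : Set E}
    (hX : IsClosed X) (zc : E × ℝ) {F : ℕ → E → EReal} {f : E → EReal}
    (hF : ∀ ν, LscFcnOn X (F ν)) (hf : LscFcnOn X f) (h : EpiConvergesOn X F f) :
    Tendsto (fun ν => awDist X zc (F ν) f) atTop (𝓝 0) := by
  have hd := tendsto_infDist_of_epi hX hF hf h
  -- distance functions are nonexpansive, so pointwise convergence is uniform on compact balls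
  have hgap : ∀ ρ, Tendsto (fun ν => distGap (epiSet X (F ν)) (epiSet X f) zc ρ) atTop (𝓝 0) := by
    intro ρ
    rw [Metric.tendsto_atTop']
    intro ε hε
    have hu : ∀ᶠ ν in atTop, ∀ z ∈ Metric.closedBall zc ρ,
        |Metric.infDist z (epiSet X (F ν)) - Metric.infDist z (epiSet X f)| ≤ ε / 2 := by
      refine compact_eventually_forall (isCompact_closedBall zc ρ) fun z _ => ?_
      have h1 : ∀ᶠ y : ℕ × (E × ℝ) in atTop ×ˢ 𝓝 z,
          |Metric.infDist z (epiSet X (F y.1)) - Metric.infDist z (epiSet X f)| < ε / 6 := by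
        have := (hd z).comp (tendsto_fst (f := atTop) (g := 𝓝 z))
        exact this.eventually (Metric.ball_mem_nhds _ (by linarith : 0 < ε / 6))
      have h2 : ∀ᶠ y : ℕ × (E × ℝ) in atTop ×ˢ 𝓝 z, y.2 ∈ Metric.ball z (ε / 6) :=
        tendsto_snd.eventually (Metric.ball_mem_nhds _ (by linarith))
      filter_upwards [h1, h2] with y h1 h2
      have h3 := gap_le (epiSet X (F y.1)) (epiSet X f) z (Metric.ball_subset_closedBall h2)
      linarith
    obtain ⟨N, hN⟩ := eventually_atTop.1 hu
    refine ⟨N, fun ν hν => ?_⟩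
    rw [Real.dist_eq, sub_zero, abs_of_nonneg (distGap_nonneg _ _ _ _)]
    exact (distGap_le _ _ _ (by linarith) (hN ν hν.le)).trans_lt (by linarith)
  obtain ⟨C, hC⟩ : ∃ C, ∀ ν,
      |Metric.infDist zc (epiSet X (F ν)) - Metric.infDist zc (epiSet X f)| ≤ C := by
    obtain ⟨C, hC⟩ := ((hd zc).sub_const (Metric.infDist zc (epiSet X f))).abs.bddAbove_range
    exact ⟨C, fun ν => hC ⟨ν, rfl⟩⟩
  simp_rw [awDist_eq]
  have := tendsto_integral_of_dominated_convergence (μ := volume.restrict (Ioi (0 : ℝ)))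
    (F := fun ν ρ => distGap (epiSet X (F ν)) (epiSet X f) zc ρ * Real.exp (-ρ))
    (f := fun _ => 0) (fun ρ : ℝ => (C + 2 * ρ) * Real.exp (-ρ))
    (fun ν => (distGap_weight_measurable _ _ zc).aestronglyMeasurable)
    (integrableOn_weight C) (fun ν => ?_)
    (Eventually.of_forall fun ρ => by simpa using (hgap ρ).mul_const (Real.exp (-ρ)))
  · simpa using this
  · filter_upwards [ae_restrict_mem measurableSet_Ioi] with ρ hρ
    rw [Real.norm_of_nonneg (mul_nonneg (distGap_nonneg _ _ _ _) (Real.exp_pos _).le)]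
    have hρ : (0 : ℝ) < ρ := hρ
    have hC0 : 0 ≤ C := (abs_nonneg _).trans (hC 0)
    gcongr
    exact distGap_le _ _ zc (by positivity) fun z hz =>
      (gap_le _ _ zc hz).trans (by linarith [hC ν])

/-- Since the gap is monotone in the radius, its value at `R` is dominated by the integral over
`(R, R + 1)`. -/
lemma distGap_le_integral {M : Type*} [PseudoMetricSpace M] (A B : Set M) (zc : M) {R : ℝ}
    (hR : 0 ≤ R) : distGap A B zc R * Real.exp (-(R + 1)) ≤
      ∫ ρ in Ioi (0 : ℝ), distGap A B zc ρ * Real.exp (-ρ) := by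
  have hsub : Ioc R (R + 1) ⊆ Ioi 0 := fun ρ hρ => lt_of_le_of_lt hR hρ.1
  have h1 := setIntegral_mono_set (distGap_weight_integrable A B zc)
    (Eventually.of_forall fun ρ => mul_nonneg (distGap_nonneg _ _ _ _) (Real.exp_pos _).le)
    (LE.le.eventuallyLE (l := ae volume) hsub)
  refine le_trans ?_ h1
  have h2 : ∫ ρ in Ioc R (R + 1), distGap A B zc R * Real.exp (-(R + 1)) =
      distGap A B zc R * Real.exp (-(R + 1)) := by simp
  rw [← h2]
  refine setIntegral_mono_on (integrableOn_const (by simp)) ((distGap_weight_integrable A B zc).mono_set hsub)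
    measurableSet_Ioc fun ρ hρ => ?_
  exact mul_le_mul (distGap_mono A B zc hρ.1.le) (Real.exp_le_exp.2 (by linarith [hρ.2]))
    (Real.exp_pos _).le (distGap_nonneg _ _ _ _)

lemma epi_of_awDist_tendsto {E : Type*} [PseudoMetricSpace E] {X : Set E}
    (hX : IsClosed X) (zc : E × ℝ) {F : ℕ → E → EReal} {f : E → EReal}
    (hF : ∀ ν, LscFcnOn X (F ν)) (hf : LscFcnOn X f)
    (h : Tendsto (fun ν => awDist X zc (F ν) f) atTop (𝓝 0)) : EpiConvergesOn X F f := by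
  refine epi_of_tendsto_infDist hX hF hf fun p => ?_
  rw [tendsto_iff_dist_tendsto_zero]
  have h1 := h.mul_const (Real.exp (dist p zc + 1))
  rw [zero_mul] at h1
  refine squeeze_zero (fun _ => dist_nonneg) (fun ν => ?_) h1
  have h2 := distGap_le_integral (epiSet X (F ν)) (epiSet X f) zc (dist_nonneg (x := p) (y := zc))
  rw [← awDist_eq] at h2
  rw [Real.dist_eq]
  refine (le_distGap (epiSet X (F ν)) (epiSet X f) zc
    (Metric.mem_closedBall.2 (le_refl (dist p zc)))).trans ?_
  have h3 := mul_le_mul_of_nonneg_right h2 (Real.exp_pos (dist p zc + 1)).le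
  rwa [mul_assoc, ← Real.exp_add, neg_add_cancel, Real.exp_zero, mul_one] at h3

/-! ### Equi-semicontinuity and pointwise convergence of the integrands -/

lemma lt_of_min_sub_le {u v : EReal} {a ε ρ : ℝ} (h : min (u - (ε : EReal)) (ρ : EReal) ≤ v)
    (hv : v < (a : EReal)) (ha : a ≤ ρ) : u < ((a + ε : ℝ) : EReal) := by
  have h1 : u - (ε : EReal) < a := by
    rcases min_le_iff.1 h with h | h
    · exact h.trans_lt hv
    · exact absurd (h.trans_lt hv) (not_lt.2 (by exact_mod_cast ha))
  induction u with
  | bot => exact EReal.bot_lt_coe _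
  | top => simp at h1
  | coe r =>
    norm_cast at h1 ⊢
    linarith

/-- Under equi-lower semicontinuity, epi-convergence implies pointwise convergence. -/
lemma EquiLscOn.tendsto_of_epi {E : Type*} [PseudoMetricSpace E] {X : Set E}
    {F : ℕ → E → EReal} {f : E → EReal} (he : EquiLscOn X F) (h : EpiConvergesOn X F f)
    {z : E} (hz : z ∈ X) : Tendsto (fun ν => F ν z) atTop (𝓝 (f z)) := by
  refine tendsto_of_le_liminf_of_limsup_le
    ((h z hz).1 (fun _ => z) (fun _ => hz) tendsto_const_nhds) ?_
  rcases he z hz with h0 | h0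
  · rw [h0]; exact bot_le
  obtain ⟨zs, hzs, hzt, hl⟩ := (h z hz).2
  refine le_of_forall_gt_imp_ge_of_dense fun c hc => ?_
  obtain ⟨a, ha1, ha2⟩ := EReal.lt_iff_exists_real_btwn.1 hc
  obtain ⟨b, hb1, hb2⟩ := EReal.lt_iff_exists_real_btwn.1 ha2
  have hab : a < b := by exact_mod_cast hb1
  obtain ⟨ν', δ, hδ, hν'⟩ := h0 (max a 1) (b - a) (by positivity) (by linarith)
  refine limsup_le_of_le (by isBoundedDefault) ?_
  filter_upwards [eventually_lt_of_limsup_lt (hl.trans_lt ha1), eventually_ge_atTop ν',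
    hzt.eventually (Metric.ball_mem_nhds z hδ)] with ν h1 h2 h3
  have h4 := (hν' ν h2).trans (iInf_le_of_le (zs ν) (iInf_le_of_le (hzs ν)
    (iInf_le _ (Metric.mem_ball.1 h3).le)))
  have h5 := lt_of_min_sub_le h4 h1 (le_max_left _ _)
  rw [add_sub_cancel] at h5
  exact (h5.trans hb2).le

/-- Equi-lower semicontinuity turns convergence at a point into a joint lower bound near it. -/
lemma EquiLscOn.eventually_lt {E : Type*} [PseudoMetricSpace E] {Z : Set E}
    {F : ℕ → E → EReal} (he : EquiLscOn Z F) {z : E} (hz : z ∈ Z) {L : EReal}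
    (hL : Tendsto (fun ν => F ν z) atTop (𝓝 L)) {a : EReal} (ha : a < L) :
    ∀ᶠ p : ℕ × E in atTop ×ˢ 𝓝[Z] z, a < F p.1 p.2 := by
  rcases he z hz with h0 | h0
  · rw [hL.limsup_eq] at h0
    simp [h0] at ha
  obtain ⟨b, hb1, hb2⟩ := EReal.lt_iff_exists_real_btwn.1 ha
  obtain ⟨c, hc1, hc2⟩ := EReal.lt_iff_exists_real_btwn.1 hb2
  have hbc : b < c := by exact_mod_cast hc1
  obtain ⟨ν', δ, hδ, hν'⟩ := h0 (max b 1) (c - b) (by positivity) (by linarith)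
  have e1 : ∀ᶠ p : ℕ × E in atTop ×ˢ 𝓝[Z] z, ν' ≤ p.1 ∧ (c : EReal) < F p.1 z :=
    tendsto_fst.eventually ((eventually_ge_atTop ν').and (hL.eventually (lt_mem_nhds hc2)))
  have e2 : ∀ᶠ p : ℕ × E in atTop ×ˢ 𝓝[Z] z, p.2 ∈ Z ∧ p.2 ∈ Metric.ball z δ :=
    tendsto_snd.eventually (Filter.inter_mem self_mem_nhdsWithin
      (mem_nhdsWithin_of_mem_nhds (Metric.ball_mem_nhds z hδ)))
  filter_upwards [e1, e2] with p h1 h2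
  have h4 := (hν' p.1 h1.1).trans (iInf_le_of_le p.2 (iInf_le_of_le h2.1
    (iInf_le _ (Metric.mem_ball.1 h2.2).le)))
  by_contra hc
  have h5 := lt_of_min_sub_le h4 ((not_lt.1 hc).trans_lt hb1) (le_max_left _ _)
  rw [add_sub_cancel] at h5
  exact lt_asymm h5 h1.2

/-- Pointwise convergence of the integrands. The lower bound combines the joint `liminf`
inequalities of both epi-limits with compactness of the feasible set; the upper bound evaluates
at a nearly optimal `y`. -/
lemma bop_tendsto {E Ξ' : Type*} [PseudoMetricSpace E] [PseudoMetricSpace Ξ'] {X : Set E}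
    {Y : E → Ξ' → Set E} {β : ℝ} (hβ : 0 < β) {φ : E → E → Ξ' → ℝ} {φν : ℕ → E → E → Ξ' → ℝ}
    (hφe : EpiConvergesOn (X ×ˢ X ×ˢ (univ : Set Ξ'))
      (fun ν p => ((φν ν p.1 p.2.1 p.2.2 : ℝ) : EReal))
      (fun p => ((φ p.1 p.2.1 p.2.2 : ℝ) : EReal)))
    (hφp : ∀ x ∈ X, ∀ y ∈ X, ∀ ξ : Ξ',
      Tendsto (fun ν => φν ν x y ξ) atTop (𝓝 (φ x y ξ)))
    {V : ℕ → E → EReal} {W : E → EReal} (hV : EpiConvergesOn X V W)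
    (hVp : ∀ y ∈ X, Tendsto (fun ν => V ν y) atTop (𝓝 (W y)))
    {x : E} (hx : x ∈ X) {ξ : Ξ'} (hYc : IsCompact (Y x ξ)) (hYX : Y x ξ ⊆ X) :
    Tendsto (fun ν => bop Y β (φν ν) (V ν) x ξ) atTop (𝓝 (bop Y β φ W x ξ)) := by
  have hβ' : (0 : EReal) < β := by exact_mod_cast hβ
  rw [tendsto_order]
  constructor
  · intro a ha
    obtain ⟨a', ha1, ha2⟩ := exists_between ha
    have key : ∀ᶠ ν in atTop, ∀ y ∈ Y x ξ, y ∈ X →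
        a' < ((φν ν x y ξ : ℝ) : EReal) + (β : EReal) * V ν y := by
      refine compact_eventually_forall hYc fun y hy => ?_
      refine eventually_prod_of_nhdsWithin
        (Q := fun p : ℕ × E => a' < ((φν p.1 x p.2 ξ : ℝ) : EReal) + (β : EReal) * V p.1 p.2) ?_
      have hyX := hYX hy
      have : (𝓝[X] y).NeBot := mem_closure_iff_nhdsWithin_neBot.1 (subset_closure hyX)
      have hlt : a' < ((φ x y ξ : ℝ) : EReal) + (β : EReal) * W y :=
        ha2.trans_le (iInf₂_le y hy)
      have ht : Tendsto (fun p : ℕ × E => (p.1, (x, p.2, ξ))) (atTop ×ˢ 𝓝[X] y)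
          (atTop ×ˢ 𝓝[X ×ˢ X ×ˢ (univ : Set Ξ')] (x, y, ξ)) := by
        refine tendsto_fst.prodMk (tendsto_nhdsWithin_iff.2 ⟨?_, ?_⟩)
        · exact tendsto_const_nhds.prodMk_nhds
            ((tendsto_snd.mono_right nhdsWithin_le_nhds).prodMk_nhds tendsto_const_nhds)
        · filter_upwards [tendsto_snd.eventually self_mem_nhdsWithin] with p hp
          exact ⟨hx, hp, mem_univ _⟩
      have h1 : ((φ x y ξ : ℝ) : EReal) ≤
          liminf (fun p : ℕ × E => ((φν p.1 x p.2 ξ : ℝ) : EReal)) (atTop ×ˢ 𝓝[X] y) :=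
        (hφe.le_liminf_prod (z := (x, y, ξ)) ⟨hx, hyX, mem_univ _⟩).trans
          (liminf_le_liminf_of_le (u := fun p : ℕ × (E × E × Ξ') =>
            ((φν p.1 p.2.1 p.2.2.1 p.2.2.2 : ℝ) : EReal)) ht)
      have h2 : (β : EReal) * W y ≤
          liminf (fun p : ℕ × E => (β : EReal) * V p.1 p.2) (atTop ×ˢ 𝓝[X] y) := by
        rw [EReal.liminf_const_mul_of_nonneg_of_ne_top hβ'.le (EReal.coe_ne_top β)]
        exact mul_le_mul_of_nonneg_left (hV.le_liminf_prod hyX) hβ'.le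
      exact eventually_lt_of_lt_liminf
        (hlt.trans_le ((add_le_add h1 h2).trans EReal.le_liminf_add))
    filter_upwards [key] with ν hν
    exact ha1.trans_le (le_iInf₂ fun y hy => (hν y hy (hYX hy)).le)
  · intro a ha
    obtain ⟨y, hy, hya⟩ : ∃ y, ∃ _ : y ∈ Y x ξ, ((φ x y ξ : ℝ) : EReal) + (β : EReal) * W y < a := by
      simpa only [bop, iInf_lt_iff] using ha
    have h1 : Tendsto (fun ν => ((φν ν x y ξ : ℝ) : EReal)) atTop (𝓝 ((φ x y ξ : ℝ) : EReal)) :=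
      EReal.tendsto_coe.2 (hφp x hx y (hYX hy) ξ)
    have h2 : Tendsto (fun ν => (β : EReal) * V ν y) atTop (𝓝 ((β : EReal) * W y)) :=
      EReal.Tendsto.const_mul (hVp y (hYX hy)) (Or.inl (EReal.coe_ne_bot β)) (Or.inl (EReal.coe_ne_top β))
    have h3 := (EReal.continuousAt_add (p := (((φ x y ξ : ℝ) : EReal), (β : EReal) * W y))
      (Or.inl (EReal.coe_ne_top _)) (Or.inl (EReal.coe_ne_bot _))).tendsto.comp
      (h1.prodMk_nhds h2)
    filter_upwards [h3.eventually (gt_mem_nhds hya)] with ν hν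
    exact (iInf₂_le y hy).trans_lt hν

/-! ### Integrals of extended-real functions -/

lemma erealToENN_eq (x : EReal) : erealToENN x = x.toENNReal := rfl

lemma EIntegrable.ae_finite {Ω : Type*} [MeasurableSpace Ω] {P : Measure Ω} {g : Ω → EReal}
    (h : EIntegrable P g) : ∀ᵐ ω ∂P, g ω ≠ ⊤ ∧ g ω ≠ ⊥ := by
  obtain ⟨hm, h1, h2⟩ := h
  have hm' : AEMeasurable (fun ω => -(g ω)) P := continuous_neg.measurable.comp_aemeasurable hm
  have h3 := ae_lt_top' hm.ereal_toENNReal h1.ne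
  have h4 := ae_lt_top' hm'.ereal_toENNReal h2.ne
  filter_upwards [h3, h4] with ω h5 h6
  refine ⟨fun h => ?_, fun h => ?_⟩
  · simp [h] at h5
  · simp [h] at h6

lemma EIntegrable.integrable {Ω : Type*} [MeasurableSpace Ω] {P : Measure Ω} {g : Ω → EReal}
    (h : EIntegrable P g) : Integrable (fun ω => (g ω).toReal) P := by
  have hf := h.ae_finite
  obtain ⟨hm, h1, h2⟩ := h
  refine ⟨hm.ereal_toReal.aestronglyMeasurable, ?_⟩
  rw [HasFiniteIntegral]
  refine lt_of_le_of_lt ?_ (ENNReal.add_lt_top.2 ⟨h1, h2⟩)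
  have hm1 : AEMeasurable (fun ω => erealToENN (g ω)) P := hm.ereal_toENNReal
  rw [← lintegral_add_left' hm1]
  refine lintegral_mono_ae ?_
  filter_upwards [hf] with ω hω
  lift g ω to ℝ using hω with r
  rw [erealToENN_eq, erealToENN_eq, ← EReal.coe_neg, EReal.toReal_coe, EReal.real_coe_toENNReal,
    EReal.real_coe_toENNReal, Real.enorm_eq_ofReal_abs]
  rcases le_total 0 r with h | h
  · simp [abs_of_nonneg h]
  · simp [abs_of_nonpos h]

lemma EIntegrable.eintegral_eq {Ω : Type*} [MeasurableSpace Ω] {P : Measure Ω} {g : Ω → EReal}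
    (h : EIntegrable P g) : eintegral P g = ((∫ ω, (g ω).toReal ∂P : ℝ) : EReal) := by
  have hf := h.ae_finite
  have e1 : ∫⁻ ω, erealToENN (g ω) ∂P = ∫⁻ ω, ENNReal.ofReal (g ω).toReal ∂P := by
    refine lintegral_congr_ae ?_
    filter_upwards [hf] with ω hω
    rw [erealToENN_eq, EReal.toENNReal_of_ne_top hω.1]
  have e2 : ∫⁻ ω, erealToENN (-(g ω)) ∂P = ∫⁻ ω, ENNReal.ofReal (-(g ω).toReal) ∂P := by
    refine lintegral_congr_ae ?_
    filter_upwards [hf] with ω hω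
    rw [erealToENN_eq, EReal.toENNReal_of_ne_top (by simpa using hω.2), EReal.toReal_neg_eq]
  have h1 := h.2.1
  have h2 := h.2.2
  rw [integral_eq_lintegral_pos_part_sub_lintegral_neg_part h.integrable, eintegral, ← e1, ← e2,
    EReal.coe_sub, EReal.coe_ennreal_toReal h1.ne, EReal.coe_ennreal_toReal h2.ne]

lemma EIntegrable.of_measurable_comp {Ω : Type*} [MeasurableSpace Ω] {P : Measure Ω}
    {g : Ω → EReal} (h : EIntegrable P g) {T : EReal → EReal} (hT : Measurable T)
    (hT' : ∀ t, T t = t ∨ T t = 0) : EIntegrable P (fun ω => T (g ω)) := by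
  refine ⟨hT.comp_aemeasurable h.1, lt_of_le_of_lt (lintegral_mono fun ω => ?_) h.2.1,
    lt_of_le_of_lt (lintegral_mono fun ω => ?_) h.2.2⟩
  · rcases hT' (g ω) with h | h <;> simp [h, erealToENN]
  · rcases hT' (g ω) with h | h <;> simp [h, erealToENN]

lemma EIntegrable.truncAbove {Ω : Type*} [MeasurableSpace Ω] {P : Measure Ω} {g : Ω → EReal}
    (h : EIntegrable P g) (α : ℝ) : EIntegrable P (truncAbove g α) :=
  h.of_measurable_comp (T := fun t => if (α : EReal) ≤ t then t else 0)
    (Measurable.ite measurableSet_Ici measurable_id measurable_const)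
    (fun t => by by_cases ht : (α : EReal) ≤ t <;> simp [ht])

lemma EIntegrable.truncBelow {Ω : Type*} [MeasurableSpace Ω] {P : Measure Ω} {g : Ω → EReal}
    (h : EIntegrable P g) (α : ℝ) : EIntegrable P (truncBelow g α) :=
  h.of_measurable_comp (T := fun t => if t ≤ (α : EReal) then t else 0)
    (Measurable.ite measurableSet_Iic measurable_id measurable_const)
    (fun t => by by_cases ht : t ≤ (α : EReal) <;> simp [ht])

/-- The extended real `t` clamped to `[-M, M]`, as a real number. -/
def clampE (M : ℝ) (t : EReal) : ℝ := (max ((-M : ℝ) : EReal) (min (M : EReal) t)).toReal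

lemma clampE_continuous (M : ℝ) : Continuous (clampE M) := by
  refine EReal.continuousOn_toReal.comp_continuous (by fun_prop) fun t => ?_
  simp only [mem_compl_iff, mem_insert_iff, mem_singleton_iff, not_or]
  constructor
  · exact ((EReal.bot_lt_coe _).trans_le (le_max_left _ _)).ne'
  · exact (max_lt (EReal.coe_lt_top _) ((min_le_left _ _).trans_lt (EReal.coe_lt_top _))).ne

lemma clampE_coe (M r : ℝ) : clampE M (r : EReal) = max (-M) (min M r) := by
  rw [clampE, ← EReal.coe_strictMono.monotone.map_min, ← EReal.coe_strictMono.monotone.map_max,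
    EReal.toReal_coe]

lemma abs_clampE_le {M : ℝ} (hM : 0 ≤ M) (t : EReal) : |clampE M t| ≤ M := by
  induction t with
  | bot =>
    have : clampE M ⊥ = -M := by simp [clampE]
    rw [this, abs_neg, abs_of_nonneg hM]
  | top =>
    have : clampE M ⊤ = M := by
      rw [clampE, min_eq_left le_top, ← EReal.coe_strictMono.monotone.map_max, EReal.toReal_coe]
      exact max_eq_right (by linarith)
    rw [this, abs_of_nonneg hM]
  | coe r =>
    rw [clampE_coe, abs_le]
    exact ⟨le_max_left _ _, max_le (by linarith) (min_le_left _ _)⟩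

lemma clampE_integrable {Ω : Type*} [MeasurableSpace Ω] {P : Measure Ω} [IsProbabilityMeasure P]
    {g : Ω → EReal} (hg : AEMeasurable g P) {M : ℝ} (hM : 0 ≤ M) :
    Integrable (fun ω => clampE M (g ω)) P :=
  (integrable_const M).mono'
    ((clampE_continuous M).measurable.comp_aemeasurable hg).aestronglyMeasurable
    (Eventually.of_forall fun _ => abs_clampE_le hM _)

/-- Clamping at level `M` changes the integral by no more than the two tail integrals. -/
lemma abs_integral_sub_clamp_le {Ω : Type*} [MeasurableSpace Ω] {P : Measure Ω}
    [IsProbabilityMeasure P] {g : Ω → EReal} (hg : EIntegrable P g) {M ε : ℝ} (hM : 0 ≤ M)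
    (hA : eintegral P (truncAbove g M) ≤ ε) (hB : ((-ε : ℝ) : EReal) ≤ eintegral P (truncBelow g (-M))) :
    |∫ ω, (g ω).toReal ∂P - ∫ ω, clampE M (g ω) ∂P| ≤ ε := by
  have iA := hg.truncAbove M
  have iB := hg.truncBelow (-M)
  rw [iA.eintegral_eq, EReal.coe_le_coe_iff] at hA
  rw [iB.eintegral_eq, EReal.coe_le_coe_iff] at hB
  have ic := clampE_integrable (P := P) hg.1 hM
  rw [← integral_sub hg.integrable ic, abs_le]
  constructor
  · refine hB.trans (integral_mono_ae iB.integrable (hg.integrable.sub ic) ?_)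
    filter_upwards [hg.ae_finite] with ω hω
    show (truncBelow g (-M) ω).toReal ≤ (g ω).toReal - clampE M (g ω)
    rw [truncBelow]
    lift g ω to ℝ using hω with r
    rw [clampE_coe, EReal.toReal_coe]
    split_ifs with h
    · rw [EReal.coe_le_coe_iff] at h
      rw [EReal.toReal_coe, min_eq_right (by linarith), max_eq_left h]; linarith
    · rw [EReal.coe_le_coe_iff] at h
      rw [EReal.toReal_zero, max_eq_right (le_min (by linarith) (not_le.1 h).le)]
      linarith [min_le_right M r]
  · refine (integral_mono_ae (hg.integrable.sub ic) iA.integrable ?_).trans hA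
    filter_upwards [hg.ae_finite] with ω hω
    show (g ω).toReal - clampE M (g ω) ≤ (truncAbove g M ω).toReal
    rw [truncAbove]
    lift g ω to ℝ using hω with r
    rw [clampE_coe, EReal.toReal_coe]
    split_ifs with h
    · rw [EReal.coe_le_coe_iff] at h
      rw [EReal.toReal_coe, min_eq_left h, max_eq_right (by linarith)]; linarith
    · rw [EReal.coe_le_coe_iff] at h
      rw [EReal.toReal_zero, min_eq_right (not_le.1 h).le]
      linarith [le_max_right (-M) r]

lemma integral_clampE_tendsto {Ω : Type*} [MeasurableSpace Ω] {P : Measure Ω}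
    {g : Ω → EReal} (hg : EIntegrable P g) :
    Tendsto (fun M : ℝ => ∫ ω, clampE M (g ω) ∂P) atTop (𝓝 (∫ ω, (g ω).toReal ∂P)) := by
  refine tendsto_integral_filter_of_dominated_convergence (fun ω => |(g ω).toReal|)
    (Eventually.of_forall fun M =>
      ((clampE_continuous M).measurable.comp_aemeasurable hg.1).aestronglyMeasurable) ?_
    hg.integrable.abs ?_
  · filter_upwards [eventually_ge_atTop 0] with M hM
    filter_upwards [hg.ae_finite] with ω hω
    lift g ω to ℝ using hω with r
    rw [clampE_coe, EReal.toReal_coe, Real.norm_eq_abs, abs_le]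
    constructor
    · refine le_max_of_le_right (le_min ?_ (neg_abs_le r))
      linarith [abs_nonneg r]
    · exact max_le (by linarith [abs_nonneg r]) ((min_le_right _ _).trans (le_abs_self r))
  · filter_upwards [hg.ae_finite] with ω hω
    lift g ω to ℝ using hω with r
    refine tendsto_const_nhds.congr' ?_
    filter_upwards [eventually_ge_atTop |r|] with M hM
    have := abs_le.1 hM
    rw [clampE_coe, EReal.toReal_coe, min_eq_right this.2, max_eq_right this.1]

lemma eventually_tail_above {G : ℝ → ℕ → EReal} (h : limsupAlphaTop (fun α => limsupNu (G α)) = 0)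
    {ε : ℝ} (hε : 0 < ε) : ∃ αb : ℝ, ∀ α ≥ αb, ∀ᶠ ν in atTop, G α ν < ε := by
  have h1 : limsupAlphaTop (fun α => limsupNu (G α)) < (ε : EReal) := by
    rw [h]; exact_mod_cast hε
  obtain ⟨αb, h2⟩ := iInf_lt_iff.1 h1
  refine ⟨αb, fun α hα => ?_⟩
  have h3 : limsupNu (G α) < (ε : EReal) :=
    lt_of_le_of_lt (le_iSup₂ (f := fun (α : ℝ) (_ : αb ≤ α) => limsupNu (G α)) α hα) h2
  obtain ⟨ν', h4⟩ := iInf_lt_iff.1 h3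
  filter_upwards [eventually_ge_atTop ν'] with ν hν
  exact lt_of_le_of_lt (le_iSup₂ (f := fun (ν : ℕ) (_ : ν' ≤ ν) => G α ν) ν hν) h4

lemma eventually_tail_below {E : Type*} [PseudoMetricSpace E] {X : Set E} {xb : E} (hxb : xb ∈ X)
    {G : ℝ → ℕ → E → EReal} (h : liminfAlphaBot (fun α => liminfNuX X xb (G α)) = 0)
    {ε : ℝ} (hε : 0 < ε) :
    ∃ αb : ℝ, ∀ α ≤ αb, ∀ᶠ ν in atTop, ((-ε : ℝ) : EReal) < G α ν xb := by
  have h1 : ((-ε : ℝ) : EReal) < liminfAlphaBot (fun α => liminfNuX X xb (G α)) := by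
    rw [h]; exact_mod_cast neg_lt_zero.2 hε
  obtain ⟨αb, h2⟩ := lt_iSup_iff.1 h1
  refine ⟨αb, fun α hα => ?_⟩
  have h3 : ((-ε : ℝ) : EReal) < liminfNuX X xb (G α) :=
    lt_of_lt_of_le h2 (iInf₂_le (f := fun (α : ℝ) (_ : α ≤ αb) => liminfNuX X xb (G α)) α hα)
  simp only [liminfNuX, lt_iSup_iff] at h3
  obtain ⟨δ, hδ, ν', h4⟩ := h3
  filter_upwards [eventually_ge_atTop ν'] with ν hν
  refine lt_of_lt_of_le h4 (iInf_le_of_le ν (iInf_le_of_le hν (iInf_le_of_le xb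
    (iInf_le_of_le hxb (iInf_le_of_le ?_ le_rfl)))))
  rw [dist_self]; exact hδ.le

/-! ### Convergence of integrals under weak convergence of the measures -/

/-- Weak convergence passes to uniformly bounded integrands that converge continuously: a cutoff
supported in a large ball carries almost all mass of `P`, hence of `Pν ν` for large `ν`, and on
that ball the convergence of the integrands is uniform. -/
lemma bounded_integral_tendsto {Ω : Type*} [PseudoMetricSpace Ω] [ProperSpace Ω]
    [MeasurableSpace Ω] [BorelSpace Ω] {P : Measure Ω} {Pν : ℕ → Measure Ω}
    [IsProbabilityMeasure P] [∀ ν, IsProbabilityMeasure (Pν ν)] (hweak : WeakConv Pν P)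
    {g : ℕ → Ω → ℝ} {g0 : Ω → ℝ} {M : ℝ} (hM : 0 ≤ M) (hgM : ∀ ν ω, |g ν ω| ≤ M)
    (hgi : ∀ ν, Integrable (g ν) (Pν ν))
    (hc : ∀ ξ, Tendsto (fun p : ℕ × Ω => g p.1 p.2) (atTop ×ˢ 𝓝 ξ) (𝓝 (g0 ξ))) :
    Tendsto (fun ν => ∫ ω, g ν ω ∂(Pν ν)) atTop (𝓝 (∫ ω, g0 ω ∂P)) := by
  have hpt : ∀ ξ, Tendsto (fun ν => g ν ξ) atTop (𝓝 (g0 ξ)) := fun ξ =>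
    (hc ξ).comp (tendsto_id.prodMk tendsto_const_nhds)
  have hg0M : ∀ ω, |g0 ω| ≤ M := fun ω =>
    le_of_tendsto (hpt ω).abs (Eventually.of_forall fun ν => hgM ν ω)
  have hcont : Continuous g0 := by
    rw [continuous_iff_continuousAt]
    intro ξ
    rw [ContinuousAt, Metric.tendsto_nhds]
    intro ε hε
    have h1 := (hc ξ).eventually (Metric.closedBall_mem_nhds (g0 ξ) (half_pos hε))
    obtain ⟨pa, hpa, pb, hpb, hab⟩ := eventually_prod_iff.1 h1
    filter_upwards [hpb] with w hw
    have h2 : g0 w ∈ Metric.closedBall (g0 ξ) (ε / 2) :=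
      Metric.isClosed_closedBall.mem_of_tendsto (hpt w) (by
        filter_upwards [hpa] with ν hν using hab hν hw)
    exact (Metric.mem_closedBall.1 h2).trans_lt (half_lt_self hε)
  have hw0 := hweak g0 hcont ⟨M, hg0M⟩
  obtain ⟨ξ0⟩ : Nonempty Ω := nonempty_of_isProbabilityMeasure P
  set χ : ℕ → Ω → ℝ := fun n ω => max 0 (min 1 ((n : ℝ) + 1 - dist ω ξ0)) with hχ
  have hχc : ∀ n, Continuous (χ n) := fun n => by fun_prop
  have hχ0 : ∀ n ω, 0 ≤ χ n ω := fun n ω => le_max_left _ _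
  have hχ1 : ∀ n ω, χ n ω ≤ 1 := fun n ω => max_le zero_le_one (min_le_left _ _)
  have hχb : ∀ n ω, |χ n ω| ≤ 1 := fun n ω => by rw [abs_of_nonneg (hχ0 n ω)]; exact hχ1 n ω
  have hχlim : Tendsto (fun n => ∫ ω, χ n ω ∂P) atTop (𝓝 1) := by
    have h1 : Tendsto (fun n => ∫ ω, χ n ω ∂P) atTop (𝓝 (∫ _, (1 : ℝ) ∂P)) := by
      refine tendsto_integral_of_dominated_convergence (fun _ => 1)
        (fun n => (hχc n).aestronglyMeasurable) (integrable_const _)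
        (fun n => Eventually.of_forall (hχb n)) (Eventually.of_forall fun ω => ?_)
      refine tendsto_const_nhds.congr' ?_
      filter_upwards [(tendsto_natCast_atTop_atTop (R := ℝ)).eventually_ge_atTop (dist ω ξ0)]
        with n hn
      simp only [hχ]
      rw [min_eq_left (by linarith), max_eq_right zero_le_one]
    simpa using h1
  rw [Metric.tendsto_nhds]
  intro ε hε
  -- `η` is the mass the cutoff may lose
  obtain ⟨η, hη, hηε⟩ : ∃ η > 0, 2 * M * η < ε / 4 := by
    refine ⟨ε / (8 * (M + 1)), by positivity, ?_⟩
    rw [mul_div_assoc', div_lt_div_iff₀ (by positivity) (by norm_num)]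
    nlinarith
  obtain ⟨n, hn⟩ := (hχlim.eventually (lt_mem_nhds (sub_lt_self 1 hη))).exists
  have e1 := (hweak (χ n) (hχc n) ⟨1, hχb n⟩).eventually (lt_mem_nhds hn)
  have e2 : ∀ᶠ ν in atTop, ∀ w ∈ Metric.closedBall ξ0 ((n : ℝ) + 1), |g ν w - g0 w| < ε / 4 := by
    refine compact_eventually_forall (isCompact_closedBall _ _) fun ξ _ => ?_
    have h1 := (hc ξ).sub ((hcont.tendsto ξ).comp (tendsto_snd (f := atTop (α := ℕ))))
    rw [sub_self] at h1
    have h2 := h1.eventually (Metric.ball_mem_nhds 0 (by linarith : 0 < ε / 4))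
    simpa [Real.dist_eq] using h2
  have e3 := (Metric.tendsto_nhds.1 hw0) (ε / 4) (by linarith)
  filter_upwards [e1, e2, e3] with ν h1 h2 h3
  have i0 : Integrable g0 (Pν ν) := (integrable_const M).mono' hcont.aestronglyMeasurable
    (Eventually.of_forall hg0M)
  have iχ : Integrable (χ n) (Pν ν) := (integrable_const 1).mono' (hχc n).aestronglyMeasurable
    (Eventually.of_forall (hχb n))
  have ib : Integrable (fun ω => ε / 4 + 2 * M * (1 - χ n ω)) (Pν ν) :=
    (integrable_const _).add (((integrable_const _).sub iχ).const_mul _)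
  have hbd : |∫ ω, g ν ω ∂(Pν ν) - ∫ ω, g0 ω ∂(Pν ν)| ≤
      ∫ ω, (ε / 4 + 2 * M * (1 - χ n ω)) ∂(Pν ν) := by
    rw [← integral_sub (hgi ν) i0]
    refine (abs_integral_le_integral_abs).trans
      (integral_mono ((hgi ν).sub i0).abs ib fun ω => ?_)
    by_cases hω : ω ∈ Metric.closedBall ξ0 ((n : ℝ) + 1)
    · have := mul_nonneg (mul_nonneg zero_le_two hM) (sub_nonneg.2 (hχ1 n ω))
      have := h2 ω hω
      simp only
      linarith
    · have hz : χ n ω = 0 := by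
        simp only [hχ]
        rw [Metric.mem_closedBall, not_le] at hω
        exact max_eq_left ((min_le_right _ _).trans (by linarith))
      have := abs_sub (g ν ω) (g0 ω)
      simp only [hz]
      linarith [hgM ν ω, hg0M ω]
  have hval : ∫ ω, (ε / 4 + 2 * M * (1 - χ n ω)) ∂(Pν ν) =
      ε / 4 + 2 * M * (1 - ∫ ω, χ n ω ∂(Pν ν)) := by
    have i2 : Integrable (fun ω => 2 * M * (1 - χ n ω)) (Pν ν) :=
      ((integrable_const _).sub iχ).const_mul _
    rw [integral_add (integrable_const _) i2, integral_const_mul, integral_sub (integrable_const _) iχ]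
    simp
  rw [hval] at hbd
  have h5 : 2 * M * (1 - ∫ ω, χ n ω ∂(Pν ν)) ≤ 2 * M * η :=
    mul_le_mul_of_nonneg_left (by linarith) (by linarith)
  calc dist (∫ ω, g ν ω ∂(Pν ν)) (∫ ω, g0 ω ∂P)
      ≤ dist (∫ ω, g ν ω ∂(Pν ν)) (∫ ω, g0 ω ∂(Pν ν)) +
        dist (∫ ω, g0 ω ∂(Pν ν)) (∫ ω, g0 ω ∂P) := dist_triangle _ _ _
    _ < ε := by rw [Real.dist_eq]; linarith

/-- Convergence of integrals of continuously convergent integrands with uniformly small tails. -/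
lemma eintegral_tendsto {Ω : Type*} [PseudoMetricSpace Ω] [ProperSpace Ω]
    [MeasurableSpace Ω] [BorelSpace Ω] {P : Measure Ω} {Pν : ℕ → Measure Ω}
    [IsProbabilityMeasure P] [∀ ν, IsProbabilityMeasure (Pν ν)] (hweak : WeakConv Pν P)
    {g : ℕ → Ω → EReal} {g0 : Ω → EReal} (hg : ∀ ν, EIntegrable (Pν ν) (g ν))
    (hg0 : EIntegrable P g0)
    (hc : ∀ ξ, Tendsto (fun p : ℕ × Ω => g p.1 p.2) (atTop ×ˢ 𝓝 ξ) (𝓝 (g0 ξ)))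
    (hA : ∀ ε : ℝ, 0 < ε → ∃ αb : ℝ, ∀ α ≥ αb, ∀ᶠ ν in atTop,
      eintegral (Pν ν) (truncAbove (g ν) α) < ε)
    (hB : ∀ ε : ℝ, 0 < ε → ∃ αb : ℝ, ∀ α ≤ αb, ∀ᶠ ν in atTop,
      ((-ε : ℝ) : EReal) < eintegral (Pν ν) (truncBelow (g ν) α)) :
    Tendsto (fun ν => eintegral (Pν ν) (g ν)) atTop (𝓝 (eintegral P g0)) := by
  simp_rw [fun ν => (hg ν).eintegral_eq, hg0.eintegral_eq]
  refine EReal.tendsto_coe.2 ?_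
  rw [Metric.tendsto_nhds]
  intro ε hε
  obtain ⟨a, ha⟩ := hA (ε / 4) (by linarith)
  obtain ⟨b, hb⟩ := hB (ε / 4) (by linarith)
  obtain ⟨M, hM1, hMa, hMb, hM0⟩ := (((Metric.tendsto_nhds.1 (integral_clampE_tendsto hg0)) (ε / 4)
    (by linarith)).and ((eventually_ge_atTop a).and
      ((eventually_ge_atTop (-b)).and (eventually_ge_atTop (0 : ℝ))))).exists
  have hbt := bounded_integral_tendsto hweak hM0 (g := fun ν ω => clampE M (g ν ω))
    (g0 := fun ω => clampE M (g0 ω)) (fun ν ω => abs_clampE_le hM0 _)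
    (fun ν => clampE_integrable (hg ν).1 hM0)
    (fun ξ => ((clampE_continuous M).tendsto _).comp (hc ξ))
  filter_upwards [ha M hMa, hb (-M) (by linarith), (Metric.tendsto_nhds.1 hbt) (ε / 4)
    (by linarith)] with ν h1 h2 h3
  have h4 := abs_integral_sub_clamp_le (hg ν) hM0 h1.le h2.le
  rw [← Real.dist_eq] at h4
  have h5 := dist_triangle4 (∫ ω, (g ν ω).toReal ∂(Pν ν)) (∫ ω, clampE M (g ν ω) ∂(Pν ν))
    (∫ ω, clampE M (g0 ω) ∂P) (∫ ω, (g0 ω).toReal ∂P)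
  linarith

lemma eintegral_eventually_le {Ω : Type*} [MeasurableSpace Ω] {Pν : ℕ → Measure Ω}
    [∀ ν, IsProbabilityMeasure (Pν ν)]
    {g : ℕ → Ω → EReal} (hg : ∀ ν, EIntegrable (Pν ν) (g ν))
    (hA : ∀ ε : ℝ, 0 < ε → ∃ αb : ℝ, ∀ α ≥ αb, ∀ᶠ ν in atTop,
      eintegral (Pν ν) (truncAbove (g ν) α) < ε)
    (hB : ∀ ε : ℝ, 0 < ε → ∃ αb : ℝ, ∀ α ≤ αb, ∀ᶠ ν in atTop,
      ((-ε : ℝ) : EReal) < eintegral (Pν ν) (truncBelow (g ν) α)) :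
    ∃ C : ℝ, ∀ᶠ ν in atTop, eintegral (Pν ν) (g ν) ≤ C := by
  obtain ⟨a, ha⟩ := hA 1 one_pos
  obtain ⟨b, hb⟩ := hB 1 one_pos
  obtain ⟨M, hMa, hMb, hM0⟩ := ((eventually_ge_atTop a).and
      ((eventually_ge_atTop (-b)).and (eventually_ge_atTop (0 : ℝ)))).exists
  refine ⟨M + 1, ?_⟩
  filter_upwards [ha M hMa, hb (-M) (by linarith)] with ν h1 h2
  have h4 := (abs_le.1 (abs_integral_sub_clamp_le (hg ν) hM0 h1.le h2.le)).2
  have h5 : ∫ ω, clampE M (g ν ω) ∂(Pν ν) ≤ M := by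
    have := integral_mono (clampE_integrable (hg ν).1 hM0) (integrable_const M)
      (fun ω => (abs_le.1 (abs_clampE_le hM0 (g ν ω))).2)
    simpa using this
  rw [(hg ν).eintegral_eq, EReal.coe_le_coe_iff]
  linarith

/-! ### Passing to the limit in the fixed-point equation -/

/-- A left inverse of a subsequence that tends to infinity. It extends a sequence indexed along
`ψ` to all of `ℕ` without changing its limits. -/
lemma exists_leftInverse_tendsto {ψ : ℕ → ℕ} (hψ : StrictMono ψ) :
    ∃ k : ℕ → ℕ, Tendsto k atTop atTop ∧ ∀ κ, k (ψ κ) = κ := by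
  refine ⟨fun ν => Nat.findGreatest (fun j => ψ j ≤ ν) ν, ?_, fun κ => ?_⟩
  · refine tendsto_atTop.2 fun b => ?_
    filter_upwards [eventually_ge_atTop (ψ b)] with ν hν
    exact Nat.le_findGreatest ((hψ.le_apply).trans hν) hν
  · refine le_antisymm ?_ (Nat.le_findGreatest hψ.le_apply le_rfl)
    have h : ψ (Nat.findGreatest (fun j => ψ j ≤ ψ κ) (ψ κ)) ≤ ψ κ :=
      Nat.findGreatest_spec (P := fun j => ψ j ≤ ψ κ) hψ.le_apply le_rfl
    exact hψ.le_iff_le.1 h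

/-- Equi-lower and equi-upper semicontinuity together turn pointwise convergence into continuous
convergence. -/
lemma continuous_convergence {E Ξ' : Type*} [PseudoMetricSpace E] [PseudoMetricSpace Ξ']
    {X : Set E} {F : ℕ → E → Ξ' → EReal} {x : E} (hx : x ∈ X)
    (hl : EquiLscOn (X ×ˢ (univ : Set Ξ')) (fun ν p => F ν p.1 p.2))
    (hu : EquiUscOn (univ : Set Ξ') (fun ν ξ => F ν x ξ)) {ξ : Ξ'} {L : EReal}
    (hp : Tendsto (fun ν => F ν x ξ) atTop (𝓝 L)) :
    Tendsto (fun p : ℕ × Ξ' => F p.1 x p.2) (atTop ×ˢ 𝓝 ξ) (𝓝 L) := by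
  rw [tendsto_order]
  constructor
  · intro a ha
    have h1 := hl.eventually_lt (z := (x, ξ)) ⟨hx, mem_univ _⟩ hp ha
    have ht : Tendsto (fun p : ℕ × Ξ' => (p.1, (x, p.2))) (atTop ×ˢ 𝓝 ξ)
        (atTop ×ˢ 𝓝[X ×ˢ (univ : Set Ξ')] (x, ξ)) := by
      refine tendsto_fst.prodMk (tendsto_nhdsWithin_iff.2
        ⟨tendsto_const_nhds.prodMk_nhds tendsto_snd, ?_⟩)
      exact Eventually.of_forall fun p => ⟨hx, mem_univ _⟩
    exact ht.eventually h1
  · intro a ha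
    have hn : Tendsto (fun ν => -(F ν x ξ)) atTop (𝓝 (-L)) :=
      (continuous_neg.tendsto L).comp hp
    have h1 := EquiLscOn.eventually_lt hu (mem_univ ξ) hn (EReal.neg_lt_neg_iff.2 ha)
    rw [nhdsWithin_univ] at h1
    filter_upwards [h1] with p hp
    exact EReal.neg_lt_neg_iff.1 hp

/-- Infinite-horizon consistency of stochastic dynamic programming. -/
theorem infinite_horizon_consistency {n m : ℕ}
    (X : Set (EuclideanSpace ℝ (Fin n))) (hX : IsClosed X)
    (Ξ : Set (EuclideanSpace ℝ (Fin m))) (hΞ : IsClosed Ξ)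
    (Y : EuclideanSpace ℝ (Fin n) → Ξ → Set (EuclideanSpace ℝ (Fin n)))
    (hY : ∀ x ∈ X, ∀ ξ : Ξ, (Y x ξ).Nonempty ∧ IsCompact (Y x ξ) ∧ Y x ξ ⊆ X)
    (β : ℝ) (hβ : β ∈ Set.Ioo (0 : ℝ) 1)
    (φ : EuclideanSpace ℝ (Fin n) → EuclideanSpace ℝ (Fin n) → Ξ → ℝ)
    (φν : ℕ → EuclideanSpace ℝ (Fin n) → EuclideanSpace ℝ (Fin n) → Ξ → ℝ)
    (P : Measure Ξ) (Pν : ℕ → Measure Ξ)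
    [IsProbabilityMeasure P] [∀ ν, IsProbabilityMeasure (Pν ν)]
    (zc : EuclideanSpace ℝ (Fin n) × ℝ)
    (𝒱 : Set (EuclideanSpace ℝ (Fin n) → EReal))
    (h𝒱lsc : ∀ V ∈ 𝒱, LscFcnOn X V)
    -- Assumption 2
    (hA2 : ∀ V ∈ 𝒱, (∀ x ∈ X, EIntegrable P (bop Y β φ V x)) ∧
      (fun x => eintegral P (bop Y β φ V x)) ∈ 𝒱)
    (hA2ν : ∀ ν, ∀ V ∈ 𝒱, (∀ x ∈ X, EIntegrable (Pν ν) (bop Y β (φν ν) V x)) ∧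
      (fun x => eintegral (Pν ν) (bop Y β (φν ν) V x)) ∈ 𝒱)
    -- 𝒱 is closed under the Attouch–Wets distance
    (h𝒱closed : DlSeqClosed X zc 𝒱)
    -- convergence of the data
    (hweak : WeakConv Pν P)
    (hφe : EpiConvergesOn (X ×ˢ X ×ˢ (univ : Set Ξ))
      (fun ν p => ((φν ν p.1 p.2.1 p.2.2 : ℝ) : EReal))
      (fun p => ((φ p.1 p.2.1 p.2.2 : ℝ) : EReal)))
    (hφp : ∀ x ∈ X, ∀ y ∈ X, ∀ ξ : Ξ,
      Tendsto (fun ν => φν ν x y ξ) atTop (𝓝 (φ x y ξ)))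
    -- every epi-convergent sequence in 𝒱 is equi-lsc and satisfies (i) and (ii)
    (hequi : ∀ Vs : ℕ → (EuclideanSpace ℝ (Fin n) → EReal),
      (∀ ν, Vs ν ∈ 𝒱) → (∃ W, EpiConvergesOn X Vs W) →
      EquiLscOn X Vs ∧
      (∀ xb ∈ X, liminfAlphaBot (fun α => liminfNuX X xb (fun ν x =>
        eintegral (Pν ν) (truncBelow (bop Y β (φν ν) (Vs ν) x) α))) = 0) ∧
      (∀ ν, LowerSemicontinuousOn
        (fun p : EuclideanSpace ℝ (Fin n) × Ξ => bop Y β (φν ν) (Vs ν) p.1 p.2)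
        (X ×ˢ (univ : Set Ξ))) ∧
      EquiLscOn (X ×ˢ (univ : Set Ξ)) (fun ν p => bop Y β (φν ν) (Vs ν) p.1 p.2) ∧
      (∀ xb ∈ X,
        limsupAlphaTop (fun α => limsupNu (fun ν =>
          eintegral (Pν ν) (truncAbove (bop Y β (φν ν) (Vs ν) xb) α))) = 0 ∧
        (∀ ν, UpperSemicontinuous (fun ξ : Ξ => bop Y β (φν ν) (Vs ν) xb ξ)) ∧
        EquiUscOn (univ : Set Ξ) (fun ν ξ => bop Y β (φν ν) (Vs ν) xb ξ))) :
    EpiOuterLimit X (fun ν =>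
        {W ∈ 𝒱 | ∀ x ∈ X, W x = eintegral (Pν ν) (bop Y β (φν ν) W x)}) ⊆
      {W ∈ 𝒱 | ∀ x ∈ X, W x = eintegral P (bop Y β φ W x)} ∧
    (DlSeqCompact X zc 𝒱 →
      ∀ Vs : ℕ → (EuclideanSpace ℝ (Fin n) → EReal),
      (∀ ν, Vs ν ∈ 𝒱 ∧ ∀ x ∈ X, Vs ν x = eintegral (Pν ν) (bop Y β (φν ν) (Vs ν) x)) →
      (∀ W, (∃ φ' : ℕ → ℕ, StrictMono φ' ∧ EpiConvergesOn X (fun κ => Vs (φ' κ)) W) →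
        W ∈ 𝒱 ∧ ∀ x ∈ X, W x = eintegral P (bop Y β φ W x)) ∧
      ∃ W ∈ 𝒱, ∀ x ∈ X, W x = eintegral P (bop Y β φ W x)) := by
  have main : ∀ ψ : ℕ → ℕ, StrictMono ψ → ∀ s : ℕ → (EuclideanSpace ℝ (Fin n) → EReal),
      (∀ κ, s κ ∈ 𝒱) →
      (∀ κ, ∀ x ∈ X, s κ x = eintegral (Pν (ψ κ)) (bop Y β (φν (ψ κ)) (s κ) x)) →
      ∀ W, EpiConvergesOn X s W →
      W ∈ 𝒱 ∧ ∀ x ∈ X, W x = eintegral P (bop Y β φ W x) := by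
    intro ψ hψ s hs hfix W hW
    have : ProperSpace Ξ := ProperSpace.of_isClosed hΞ
    obtain ⟨k, hk, hkψ⟩ := exists_leftInverse_tendsto hψ
    -- `V` repeats terms of `s` so that its subsequence along `ψ` is `s` itself
    set V : ℕ → (EuclideanSpace ℝ (Fin n) → EReal) := fun ν => s (k ν) with hVdef
    have hVψ : ∀ κ, V (ψ κ) = s κ := fun κ => by simp only [hVdef, hkψ]
    have hV𝒱 : ∀ ν, V ν ∈ 𝒱 := fun ν => hs (k ν)
    have hVW : EpiConvergesOn X V W := hW.comp_tendsto hk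
    obtain ⟨hel, hlow, -, hjoint, hup⟩ := hequi V hV𝒱 ⟨W, hVW⟩
    have hg : ∀ x ∈ X, ∀ ν, EIntegrable (Pν ν) (bop Y β (φν ν) (V ν) x) :=
      fun x hx ν => (hA2ν ν (V ν) (hV𝒱 ν)).1 x hx
    have hA : ∀ x ∈ X, ∀ ε : ℝ, 0 < ε → ∃ αb : ℝ, ∀ α ≥ αb, ∀ᶠ ν in atTop,
        eintegral (Pν ν) (truncAbove (bop Y β (φν ν) (V ν) x) α) < ε :=
      fun x hx ε hε => eventually_tail_above (hup x hx).1 hε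
    have hB : ∀ x ∈ X, ∀ ε : ℝ, 0 < ε → ∃ αb : ℝ, ∀ α ≤ αb, ∀ᶠ ν in atTop,
        ((-ε : ℝ) : EReal) < eintegral (Pν ν) (truncBelow (bop Y β (φν ν) (V ν) x) α) :=
      fun x hx ε hε => eventually_tail_below hx (hlow x hx) hε
    -- the tail bounds keep the values `s κ x` bounded above, so `W` is proper
    have hWlsc : LscFcnOn X W := by
      refine ⟨hW.lowerSemicontinuousOn, ?_⟩
      obtain ⟨x, hx, -⟩ := (h𝒱lsc _ (hs 0)).2
      refine ⟨x, hx, ?_⟩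
      obtain ⟨C, hC⟩ := eintegral_eventually_le (hg x hx) (hA x hx) (hB x hx)
      have h1 : ∀ᶠ κ in atTop, s κ x ≤ (C : EReal) := by
        filter_upwards [hψ.tendsto_atTop.eventually hC] with κ hκ
        rw [hfix κ x hx, ← hVψ κ]
        exact hκ
      have h2 : W x ≤ (C : EReal) :=
        ((hW x hx).1 (fun _ => x) (fun _ => hx) tendsto_const_nhds).trans
          ((liminf_le_liminf h1).trans (liminf_const _).le)
      exact (h2.trans_lt (EReal.coe_lt_top C)).ne
    have hW𝒱 : W ∈ 𝒱 := h𝒱closed s hs W hWlsc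
      (awDist_tendsto_of_epi hX zc (fun κ => h𝒱lsc _ (hs κ)) hWlsc hW)
    refine ⟨hW𝒱, fun x hx => ?_⟩
    have hVp : ∀ y ∈ X, Tendsto (fun ν => V ν y) atTop (𝓝 (W y)) :=
      fun y hy => hel.tendsto_of_epi hVW hy
    have hc : ∀ ξ : Ξ, Tendsto (fun p : ℕ × Ξ => bop Y β (φν p.1) (V p.1) x p.2)
        (atTop ×ˢ 𝓝 ξ) (𝓝 (bop Y β φ W x ξ)) := fun ξ =>
      continuous_convergence (F := fun ν => bop Y β (φν ν) (V ν)) hx hjoint (hup x hx).2.2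
        (bop_tendsto hβ.1 hφe hφp hVW hVp hx (hY x hx ξ).2.1 (hY x hx ξ).2.2)
    have hlim_int := (eintegral_tendsto hweak (hg x hx) ((hA2 W hW𝒱).1 x hx) hc (hA x hx)
      (hB x hx)).comp hψ.tendsto_atTop
    refine tendsto_nhds_unique ((hVp x hx).comp hψ.tendsto_atTop) (hlim_int.congr fun κ => ?_)
    simp only [Function.comp, hVψ]
    exact (hfix κ x hx).symm
  refine ⟨?_, fun hcomp Vs hVs => ?_⟩
  · rintro W ⟨ψ, hψ, s, hs, hW⟩
    exact main ψ hψ s (fun κ => (hs κ).1) (fun κ => (hs κ).2) W hW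
  · have hcl : ∀ W, (∃ φ' : ℕ → ℕ, StrictMono φ' ∧ EpiConvergesOn X (fun κ => Vs (φ' κ)) W) →
        W ∈ 𝒱 ∧ ∀ x ∈ X, W x = eintegral P (bop Y β φ W x) := by
      rintro W ⟨ψ, hψ, hW⟩
      exact main ψ hψ (fun κ => Vs (ψ κ)) (fun κ => (hVs _).1) (fun κ => (hVs _).2) W hW
    refine ⟨hcl, ?_⟩
    obtain ⟨W, hW, ψ, hψ, hlim⟩ := hcomp Vs fun ν => (hVs ν).1
    exact ⟨W, hcl W ⟨ψ, hψ,
      epi_of_awDist_tendsto hX zc (fun κ => h𝒱lsc _ (hVs _).1) (h𝒱lsc W hW) hlim⟩⟩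

end
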